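/- Fix q ∈ (0,8). Let Ω = ⋃_{0<x≤1/2} B(x, x/√2) ∪ ⋃_{1/2<x<1} B(x, (1−x)/√2), let Ell_q = {z ∈ ℂ : q(Re z − 1/2)² + (16−q)(Im z)² < 1}, and let Ω_q = (Ω ∩ {z : Re z < 1/4 or Re z > 3/4}) ∪ (Ω ∩ Ell_q). Then there is a constant C_q > 0 such that: every f : ℝ → ℂ that is infinitely differentiable on (0,1) and satisfies S := ∑_{n=0}^∞ (2^n/(2n+1)!) ∫_0^{1/2} x^{2n+1} (|f^{(n)}(x)|² + |f^{(n)}(1−x)|²) dx < ∞ (where f^{(n)} is the n-th derivative of f within (0,1)) admits a holomorphic extension F to Ω with F(x) = f(x) for x ∈ (0,1), and S ≥ C_q ∫_{Ω_q} |F(z)|² dA(z). -/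

import Mathlib

open MeasureTheory Set Metric
open scoped ENNReal NNReal

/-- The domain `Ω = ⋃_{0<x≤1/2} B(x, x/√2) ∪ ⋃_{1/2<x<1} B(x, (1-x)/√2)`. -/
def Omega : Set ℂ :=
  (⋃ x ∈ Ioc (0 : ℝ) (1 / 2), ball (x : ℂ) (x / Real.sqrt 2)) ∪
    ⋃ x ∈ Ioo (1 / 2 : ℝ) 1, ball (x : ℂ) ((1 - x) / Real.sqrt 2)

/-- The open ellipse `Ell_q = {z : q(Re z - 1/2)² + (16-q)(Im z)² < 1}`. -/
def EllQ (q : ℝ) : Set ℂ :=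
  {z : ℂ | q * (z.re - 1 / 2) ^ 2 + (16 - q) * z.im ^ 2 < 1}

/-- The domain `Ω_q = (Ω ∩ {Re z < 1/4 ∨ Re z > 3/4}) ∪ (Ω ∩ Ell_q)`. -/
def OmegaQ (q : ℝ) : Set ℂ :=
  (Omega ∩ {z : ℂ | z.re < 1 / 4 ∨ 3 / 4 < z.re}) ∪ (Omega ∩ EllQ q)

lemma sinInt (n : ℕ) : ∫ t in (0:ℝ)..(Real.pi/2), Real.sin t ^ (2*n+1)
    = 4^n * (n.factorial:ℝ)^2 / ((2*n+1).factorial : ℝ) := by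
  induction n with
  | zero => simp
  | succ k ih =>
    have : 2*(k+1)+1 = (2*k+1)+2 := by ring
    rw [this, integral_sin_pow, ih]
    simp only [Nat.factorial_succ, Real.sin_zero, Real.cos_pi_div_two]
    push_cast
    have := Nat.factorial_ne_zero k
    have := Nat.factorial_ne_zero (2*k)
    field_simp
    ring

lemma Jint (x : ℝ) (hx : 0 < x) (n : ℕ) :
    ∫⁻ ρ in Ioo 0 (x/√2), ENNReal.ofReal (2 * ρ^(2*n+1) / √(x^2-2*ρ^2))
      = ENNReal.ofReal (2^n * x^(2*n+1) * (n.factorial:ℝ)^2 / ((2*n+1).factorial : ℝ)) := by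
  have hs2 : (0:ℝ) < √2 := by positivity
  have hsq : √2^2 = 2 := Real.sq_sqrt (by norm_num)
  have himg : (fun t => x/√2 * Real.sin t) '' (Ioo 0 (Real.pi/2)) = Ioo 0 (x/√2) := by
    ext y
    constructor
    · rintro ⟨t, ⟨h0, h1⟩, rfl⟩
      have := Real.sin_pos_of_pos_of_lt_pi h0 (by linarith [Real.pi_pos])
      have h2 : Real.sin t < 1 := by
        rw [← Real.sin_pi_div_two]
        exact Real.sin_lt_sin_of_lt_of_le_pi_div_two (by linarith) le_rfl h1
      have : 0 < x/√2 := by positivity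
      constructor
      · positivity
      · nlinarith
    · rintro ⟨h0, h1⟩
      have hp : 0 < x/√2 := by positivity
      have h2 : y / (x/√2) < 1 := by rwa [div_lt_one hp]
      have h3 : 0 < y / (x/√2) := by positivity
      refine ⟨Real.arcsin (y / (x/√2)), ⟨Real.arcsin_pos.2 h3, Real.arcsin_lt_pi_div_two.2 h2⟩, ?_⟩
      simp only
      rw [Real.sin_arcsin (by linarith) h2.le]
      field_simp
  rw [← himg, lintegral_image_eq_lintegral_abs_deriv_mul (f' := fun t => x/√2 * Real.cos t) measurableSet_Ioo
    (fun t _ => ((Real.hasDerivAt_sin t).const_mul _).hasDerivWithinAt)]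
  · have : ∀ t ∈ Ioo 0 (Real.pi/2), ENNReal.ofReal |x/√2 * Real.cos t| * ENNReal.ofReal (2 * (x/√2 * Real.sin t)^(2*n+1) / √(x^2-2*(x/√2 * Real.sin t)^2)) = ENNReal.ofReal (x^(2*n+1)/2^n * Real.sin t^(2*n+1)) := by
      intro t ht
      have hc : 0 < Real.cos t := Real.cos_pos_of_mem_Ioo ⟨by linarith [ht.1, Real.pi_pos], ht.2⟩
      have h1 : x^2-2*(x/√2 * Real.sin t)^2 = (x * Real.cos t)^2 := by
        rw [mul_pow, div_pow, hsq, mul_pow, Real.cos_sq']; ring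
      rw [h1, Real.sqrt_sq (by positivity), ← ENNReal.ofReal_mul (abs_nonneg _), abs_of_pos (by positivity)]
      congr 1
      have h2 : √2^(2*n) = 2^n := by rw [pow_mul, hsq]
      rw [mul_pow, div_pow, pow_succ (√2), h2]
      field_simp
      rw [hsq]
    rw [setLIntegral_congr_fun measurableSet_Ioo this, ← ofReal_integral_eq_lintegral_ofReal]
    · rw [← integral_Ioc_eq_integral_Ioo, ← intervalIntegral.integral_of_le (by positivity), intervalIntegral.integral_const_mul, sinInt]
      congr 1
      have : (4:ℝ)^n = 2^n*2^n := by rw [← mul_pow]; norm_num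
      rw [this]
      field_simp
    · apply IntegrableOn.mono_set (t := Icc 0 (Real.pi/2)) _ Ioo_subset_Icc_self
      apply ContinuousOn.integrableOn_Icc
      fun_prop
    · filter_upwards [ae_restrict_mem measurableSet_Ioo] with t ht
      have := Real.sin_pos_of_pos_of_lt_pi ht.1 (by linarith [Real.pi_pos, ht.2])
      positivity
  · intro s hs t ht hst
    have : 0 < x/√2 := by positivity
    have := mul_left_cancel₀ this.ne' hst
    exact Real.injOn_sin ⟨by linarith [hs.1, Real.pi_pos], hs.2.le⟩ ⟨by linarith [ht.1, Real.pi_pos], ht.2.le⟩ this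

lemma expInt (n m : ℕ) : ∫ θ in (-Real.pi)..Real.pi, (Complex.exp (θ * Complex.I))^n * (starRingEnd ℂ) ((Complex.exp (θ * Complex.I))^m) = if n = m then (2*Real.pi : ℂ) else 0 := by
  have h : ∀ θ : ℝ, (Complex.exp (θ * Complex.I))^n * (starRingEnd ℂ) ((Complex.exp (θ * Complex.I))^m) = Complex.exp ((((n:ℂ)-m) * Complex.I) * θ) := by
    intro θ
    rw [map_pow, ← Complex.exp_conj, ← Complex.exp_nat_mul, ← Complex.exp_nat_mul, ← Complex.exp_add]
    congr 1
    simp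
    ring
  simp_rw [h]
  split_ifs with hnm
  · subst hnm; simp; ring
  · have hne : ((n:ℂ)-m) ≠ 0 := by
      rw [sub_ne_zero]; exact_mod_cast hnm
    rw [integral_exp_mul_complex (mul_ne_zero hne Complex.I_ne_zero)]
    have : Complex.exp ((((n:ℂ)-m) * Complex.I) * (Real.pi:ℝ)) = Complex.exp ((((n:ℂ)-m) * Complex.I) * ((-Real.pi:ℝ):ℂ)) := by
      rw [Complex.exp_eq_exp_iff_exists_int]
      refine ⟨(n:ℤ)-m, ?_⟩
      push_cast
      ring
    rw [this]; simp

lemma parseval (N : ℕ) (c : ℕ → ℂ) :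
    ∫⁻ θ in Ioo (-Real.pi) Real.pi, (‖∑ n ∈ Finset.range N, c n * (Complex.exp (θ * Complex.I))^n‖₊ : ℝ≥0∞)^2
     = ENNReal.ofReal (2*Real.pi * ∑ n ∈ Finset.range N, ‖c n‖^2) := by
  have h1 : ∀ w : ℂ, (‖w‖₊ : ℝ≥0∞)^2 = ENNReal.ofReal (‖w‖^2) := by
    intro w
    rw [ENNReal.ofReal_pow (norm_nonneg _), ofReal_norm]; rfl
  simp_rw [h1]
  rw [← ofReal_integral_eq_lintegral_ofReal]
  · congr 1
    rw [← integral_Ioc_eq_integral_Ioo, ← intervalIntegral.integral_of_le (by linarith [Real.pi_pos])]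
    apply Complex.ofReal_injective
    rw [← intervalIntegral.integral_ofReal]
    have h2 : ∀ w : ℂ, ((‖w‖^2:ℝ):ℂ) = w * (starRingEnd ℂ) w := by
      intro w; rw [Complex.mul_conj, Complex.normSq_eq_norm_sq]
    simp_rw [h2, map_sum, Finset.sum_mul_sum]
    rw [intervalIntegral.integral_finsetSum]
    · have : ∀ n ∈ Finset.range N, (∫ (x : ℝ) in -Real.pi..Real.pi, ∑ j ∈ Finset.range N, c n * Complex.exp (x * Complex.I) ^ n * (starRingEnd ℂ) (c j * Complex.exp (x * Complex.I) ^ j)) = 2*Real.pi * (c n * (starRingEnd ℂ) (c n)) := by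
        intro n hn
        rw [intervalIntegral.integral_finsetSum]
        · have h3 : ∀ j (x:ℝ), c n * Complex.exp (x * Complex.I) ^ n * (starRingEnd ℂ) (c j * Complex.exp (x * Complex.I) ^ j) = (c n * (starRingEnd ℂ) (c j)) * ((Complex.exp (x * Complex.I))^n * (starRingEnd ℂ) ((Complex.exp (x * Complex.I))^j)) := by
            intro j x; rw [map_mul]; ring
          simp_rw [h3, intervalIntegral.integral_const_mul, expInt]
          simp only [mul_ite, mul_zero]
          rw [Finset.sum_ite_eq, if_pos hn]; ring
        · intro j _
          apply Continuous.intervalIntegrable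
          fun_prop
      rw [Finset.sum_congr rfl this, ← Finset.mul_sum]
      push_cast
      simp_rw [← h2]
      push_cast
      rfl
    · intro j _
      apply Continuous.intervalIntegrable
      fun_prop
  · apply IntegrableOn.mono_set (t := Icc (-Real.pi) (Real.pi)) _ Ioo_subset_Icc_self
    apply ContinuousOn.integrableOn_Icc
    fun_prop
  · filter_upwards with t
    positivity

lemma polyIneq (x : ℝ) (hx : 0 < x) (N : ℕ) (a : ℕ → ℂ) :
    ∫⁻ z in ball (x:ℂ) (x/√2), ENNReal.ofReal (1/(Real.pi * √(x^2-2*‖z-x‖^2))) *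
        (‖∑ n ∈ Finset.range N, a n * (z-x)^n‖₊ : ℝ≥0∞)^2 ≤
    ∑ n ∈ Finset.range N, ENNReal.ofReal (2^n * x^(2*n+1) * (n.factorial:ℝ)^2 / ((2*n+1).factorial : ℝ)) * (‖a n‖₊ : ℝ≥0∞)^2 := by
  set K : ℝ → ℝ := fun ρ => 1/(Real.pi * √(x^2-2*ρ^2)) with hK
  set P : ℂ → ℂ := fun w => ∑ n ∈ Finset.range N, a n * w^n with hP
  set G : ℂ → ℝ≥0∞ := (ball (0:ℂ) (x/√2)).indicator (fun w => ENNReal.ofReal (K ‖w‖) * (‖P w‖₊ : ℝ≥0∞)^2) with hG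
  have e1 : ∫⁻ z in ball (x:ℂ) (x/√2), ENNReal.ofReal (1/(Real.pi * √(x^2-2*‖z-x‖^2))) *
        (‖∑ n ∈ Finset.range N, a n * (z-x)^n‖₊ : ℝ≥0∞)^2 = ∫⁻ w, G w := by
    rw [← lintegral_sub_right_eq_self G (x:ℂ), ← lintegral_indicator measurableSet_ball]
    apply lintegral_congr
    intro z
    simp only [hG, indicator, mem_ball, dist_eq_norm, sub_zero, hK, hP]
  rw [e1, ← Complex.lintegral_comp_polarCoord_symm]
  have e2 : ∫⁻ p in polarCoord.target, ENNReal.ofReal p.1 • G (Complex.polarCoord.symm p)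
      = ∫⁻ p in Ioi (0:ℝ) ×ˢ Ioo (-Real.pi) Real.pi, ((Ioo 0 (x/√2)).indicator (fun ρ => ENNReal.ofReal (ρ * K ρ)) p.1) * (‖∑ n ∈ Finset.range N, (a n * (p.1:ℂ)^n) * (Complex.exp (p.2 * Complex.I))^n‖₊ : ℝ≥0∞)^2 := by
    apply setLIntegral_congr_fun (measurableSet_Ioi.prod measurableSet_Ioo)
    rintro ⟨ρ, θ⟩ ⟨hρ, hθ⟩
    simp only [mem_Ioi] at hρ
    have hn : ‖Complex.polarCoord.symm (ρ, θ)‖ = ρ := by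
      rw [Complex.norm_polarCoord_symm]; exact abs_of_pos hρ
    have hv : Complex.polarCoord.symm (ρ, θ) = ρ * Complex.exp (θ * Complex.I) := by
      rw [Complex.polarCoord_symm_apply, Complex.exp_mul_I]; simp
    simp only [hG, indicator, mem_ball, dist_eq_norm, sub_zero, hn, mem_Ioo, hρ, true_and, smul_eq_mul]
    split_ifs
    · rw [ENNReal.ofReal_mul hρ.le, mul_assoc]
      simp only [hP, hv, mul_pow, mul_assoc]
    · simp
  rw [e2, Measure.volume_eq_prod, ← Measure.prod_restrict]
  refine (lintegral_prod_le _).trans ?_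
  have e3 : ∀ ρ ∈ Ioi (0:ℝ), ∫⁻ θ in Ioo (-Real.pi) Real.pi, ((Ioo 0 (x/√2)).indicator (fun ρ => ENNReal.ofReal (ρ * K ρ)) ρ) * (‖∑ n ∈ Finset.range N, (a n * (ρ:ℂ)^n) * (Complex.exp (θ * Complex.I))^n‖₊ : ℝ≥0∞)^2
      = (Ioo 0 (x/√2)).indicator (fun ρ => ∑ n ∈ Finset.range N, ENNReal.ofReal (2 * ρ^(2*n+1) / √(x^2-2*ρ^2)) * (‖a n‖₊ : ℝ≥0∞)^2) ρ := by
    intro ρ hρ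
    simp only [mem_Ioi] at hρ
    rw [lintegral_const_mul' _ _ (by simp only [indicator]; split_ifs <;> simp), parseval]
    simp only [indicator]
    split_ifs
    · rw [← ENNReal.ofReal_mul (by simp only [hK]; positivity), Finset.mul_sum, Finset.mul_sum, ENNReal.ofReal_sum_of_nonneg (fun i _ => by simp only [hK]; positivity)]
      apply Finset.sum_congr rfl
      intro n _
      have h1 : (‖a n‖₊ : ℝ≥0∞)^2 = ENNReal.ofReal (‖a n‖^2) := by
        rw [ENNReal.ofReal_pow (norm_nonneg _), ofReal_norm]; rfl
      rw [h1, ← ENNReal.ofReal_mul (by positivity)]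
      congr 1
      rw [norm_mul, norm_pow, Complex.norm_real, Real.norm_of_nonneg hρ.le]
      simp only [hK]
      have := Real.pi_pos
      rw [one_div, mul_inv]
      field_simp
      ring
    · simp
  rw [setLIntegral_congr_fun measurableSet_Ioi e3, lintegral_indicator measurableSet_Ioo]
  refine (lintegral_mono' (Measure.restrict_mono_measure Measure.restrict_le_self _) le_rfl).trans ?_
  rw [lintegral_finsetSum']
  · apply Finset.sum_le_sum
    intro n _
    rw [lintegral_mul_const' _ _ (by simp), Jint x hx]
  · intro n _
    fun_prop

lemma polarIneq (x : ℝ) (hx : 0 < x) (a : ℕ → ℂ) (F : ℂ → ℂ)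
    (hF : ∀ z ∈ ball (x:ℂ) (x/√2), HasSum (fun n => a n * (z-x)^n) (F z)) :
    ∫⁻ z in ball (x:ℂ) (x/√2), ENNReal.ofReal (1/(Real.pi * √(x^2-2*‖z-x‖^2))) * (‖F z‖₊ : ℝ≥0∞)^2 ≤
    ∑' n, ENNReal.ofReal (2^n * x^(2*n+1) * (n.factorial:ℝ)^2 / ((2*n+1).factorial : ℝ)) * (‖a n‖₊ : ℝ≥0∞)^2 := by
  have e : ∀ z ∈ ball (x:ℂ) (x/√2), ENNReal.ofReal (1/(Real.pi * √(x^2-2*‖z-x‖^2))) * (‖F z‖₊ : ℝ≥0∞)^2 = Filter.liminf (fun N => ENNReal.ofReal (1/(Real.pi * √(x^2-2*‖z-x‖^2))) *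
        (‖∑ n ∈ Finset.range N, a n * (z-x)^n‖₊ : ℝ≥0∞)^2) Filter.atTop := by
    intro z hz
    symm
    apply Filter.Tendsto.liminf_eq
    apply ENNReal.Tendsto.const_mul _ (Or.inr ENNReal.ofReal_ne_top)
    have h := (hF z hz).tendsto_sum_nat
    exact ((ENNReal.continuous_pow 2).tendsto _).comp (h.enorm)
  rw [setLIntegral_congr_fun measurableSet_ball e]
  refine (lintegral_liminf_le' (fun N => by fun_prop)).trans ?_
  apply Filter.liminf_le_of_le
  · isBoundedDefault
  · intro b hb
    obtain ⟨N, hN⟩ := hb.exists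
    exact hN.trans ((polyIneq x hx N a).trans (ENNReal.sum_le_tsum _))

noncomputable def kerH (x : ℝ) (z : ℂ) : ℝ≥0∞ :=
  (ball (x:ℂ) (x/√2)).indicator (fun z => ENNReal.ofReal (1/(Real.pi * √(x^2-2*‖z-x‖^2)))) z

lemma measurable_kerH : Measurable (Function.uncurry kerH) := by
  have : Function.uncurry kerH = {p : ℝ × ℂ | ‖p.2 - p.1‖ < p.1/√2}.indicator (fun p => ENNReal.ofReal (1/(Real.pi * √(p.1^2-2*‖p.2-p.1‖^2)))) := by
    ext ⟨x, z⟩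
    simp [kerH, indicator, Function.uncurry, mem_ball, dist_eq_norm]
  rw [this]
  apply Measurable.indicator
  · fun_prop
  · apply measurableSet_lt <;> fun_prop

lemma kernelLower (δ : ℝ) (hδ1 : δ ≤ 1) (z : ℂ) (ha : 0 < z.re) (hb : z.im^2 < z.re^2)
    (h : 2 * z.re - 1/2 ≤ (1-δ) * √(2*z.re^2-2*z.im^2)) :
    ENNReal.ofReal (δ/Real.pi) ≤ ∫⁻ x in Ioo (0:ℝ) (1/2), kerH x z := by
  set R := √(2*z.re^2-2*z.im^2) with hR
  have hR2 : R^2 = 2*z.re^2-2*z.im^2 := Real.sq_sqrt (by linarith)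
  have hR0 : 0 < R := Real.sqrt_pos.2 (by linarith)
  have hRa : R < 2 * z.re := by nlinarith [sq_nonneg z.im]
  have hsub : Ioo (2*z.re - R) (2*z.re - (1-δ)*R) ⊆ Ioo (0:ℝ) (1/2) := by
    rintro x ⟨h1, h2⟩
    constructor <;> linarith
  have hlow : ∀ x ∈ Ioo (2*z.re - R) (2*z.re - (1-δ)*R), ENNReal.ofReal (1/(Real.pi*R)) ≤ kerH x z := by
    intro x hx
    have hx0 : 0 < x := (hsub hx).1
    have hnorm : ‖z - x‖^2 = (z.re-x)^2 + z.im^2 := by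
      rw [← Complex.normSq_eq_norm_sq, Complex.normSq_apply]; simp; ring
    have h3 : (x - 2*z.re)^2 < R^2 := by
      apply sq_lt_sq'
      · linarith [hx.1]
      · nlinarith [hx.2]
    have hid : x^2-2*‖z-x‖^2 = R^2 - (x-2*z.re)^2 := by rw [hnorm, hR2]; ring
    have hmem : z ∈ ball (x:ℂ) (x/√2) := by
      rw [mem_ball, dist_eq_norm]
      apply lt_of_pow_lt_pow_left₀ 2 (by positivity)
      rw [div_pow, Real.sq_sqrt (by norm_num)]
      linarith
    rw [kerH, indicator_of_mem hmem]
    apply ENNReal.ofReal_le_ofReal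
    have hs : 0 < √(x^2-2*‖z-x‖^2) := Real.sqrt_pos.2 (by rw [hid]; linarith)
    have hs' : √(x^2-2*‖z-x‖^2) ≤ R := by
      rw [Real.sqrt_le_left hR0.le, hid]; nlinarith
    have := Real.pi_pos
    gcongr
  calc ENNReal.ofReal (δ/Real.pi) = ∫⁻ x in Ioo (2*z.re - R) (2*z.re - (1-δ)*R), ENNReal.ofReal (1/(Real.pi*R)) := by
        rw [setLIntegral_const, Real.volume_Ioo, ← ENNReal.ofReal_mul (by positivity)]
        congr 1
        field_simp
        ring
    _ ≤ ∫⁻ x in Ioo (2*z.re - R) (2*z.re - (1-δ)*R), kerH x z := setLIntegral_mono' measurableSet_Ioo hlow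
    _ ≤ _ := lintegral_mono_set hsub

lemma leftLemma (c : ℝ≥0∞) (φ : ℂ → ℝ≥0∞) (hφ : Measurable φ) (A : ℝ → ℝ≥0∞)
    (hA : ∀ᵐ x : ℝ ∂(volume.restrict (Ioo (0:ℝ) (1/2))), ∫⁻ z in ball (x:ℂ) (x/√2), ENNReal.ofReal (1/(Real.pi * √(x^2-2*‖z-x‖^2))) * φ z ≤ A x)
    (E : Set ℂ) (hE : ∀ z ∈ E, c ≤ ∫⁻ x in Ioo (0:ℝ) (1/2), kerH x z) :
    c * ∫⁻ z in E, φ z ≤ ∫⁻ x in Ioo (0:ℝ) (1/2), A x := by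
  have hm : Measurable (fun z => ∫⁻ x in Ioo (0:ℝ) (1/2), kerH x z) :=
    measurable_kerH.lintegral_prod_left
  set E' := {z | c ≤ ∫⁻ x in Ioo (0:ℝ) (1/2), kerH x z}
  have hE'm : MeasurableSet E' := measurableSet_le measurable_const hm
  calc c * ∫⁻ z in E, φ z ≤ c * ∫⁻ z in E', φ z := by
        gcongr; exact hE
    _ = ∫⁻ z in E', c * φ z := (lintegral_const_mul _ hφ).symm
    _ ≤ ∫⁻ z in E', (∫⁻ x in Ioo (0:ℝ) (1/2), kerH x z) * φ z :=
        setLIntegral_mono' hE'm (fun z hz => by gcongr; exact hz)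
    _ ≤ ∫⁻ z, (∫⁻ x in Ioo (0:ℝ) (1/2), kerH x z) * φ z := setLIntegral_le_lintegral _ _
    _ = ∫⁻ z, ∫⁻ x in Ioo (0:ℝ) (1/2), kerH x z * φ z := by
        apply lintegral_congr; intro z
        rw [lintegral_mul_const]
        exact measurable_kerH.comp (measurable_id.prodMk measurable_const)
    _ = ∫⁻ x in Ioo (0:ℝ) (1/2), ∫⁻ z, kerH x z * φ z := by
        rw [lintegral_lintegral_swap]
        apply Measurable.aemeasurable
        exact (measurable_kerH.comp measurable_swap).mul (hφ.comp measurable_fst)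
    _ ≤ _ := by
        apply lintegral_mono_ae
        filter_upwards [hA] with x hx
        refine le_trans (le_of_eq ?_) hx
        rw [← lintegral_indicator measurableSet_ball]
        apply lintegral_congr; intro z
        simp only [kerH, indicator]
        split_ifs <;> simp

lemma mem_Omega_sector (z : ℂ) (hz : z ∈ Omega) : (0 < z.re ∧ z.im^2 < z.re^2) ∧ (0 < 1 - z.re ∧ z.im^2 < (1 - z.re)^2) := by
  have key : ∀ x m : ℝ, 0 < m → z ∈ ball (x:ℂ) (m/√2) → 2*((z.re-x)^2+z.im^2) < m^2 := by
    intro x m hm hz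
    rw [mem_ball, dist_eq_norm] at hz
    have hnorm : ‖z - x‖^2 = (z.re-x)^2 + z.im^2 := by
      rw [← Complex.normSq_eq_norm_sq, Complex.normSq_apply]; simp; ring
    have := pow_lt_pow_left₀ hz (norm_nonneg _) (two_ne_zero)
    rw [div_pow, Real.sq_sqrt (by norm_num), hnorm] at this
    linarith
  have fin : ∀ x m a b : ℝ, 0 < m → m ≤ x → 2*((a-x)^2+b^2) < m^2 → 0 < a ∧ b^2 < a^2 := by
    intro x m a b hm hmx h
    constructor
    · by_contra hc
      nlinarith [sq_nonneg b]
    · nlinarith [sq_nonneg (x-2*a)]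
  rcases hz with hz | hz
  · simp only [mem_iUnion] at hz
    obtain ⟨x, hx, hz⟩ := hz
    have h := key x x hx.1 hz
    exact ⟨fin x x _ _ hx.1 le_rfl h, fin (1-x) x (1-z.re) z.im hx.1 (by linarith [hx.2]) (by linarith)⟩
  · simp only [mem_iUnion] at hz
    obtain ⟨x, hx, hz⟩ := hz
    have h := key x (1-x) (by linarith [hx.2]) hz
    exact ⟨fin x (1-x) _ _ (by linarith [hx.2]) (by linarith [hx.1]) h, fin (1-x) (1-x) (1-z.re) z.im (by linarith [hx.2]) le_rfl (by linarith)⟩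

lemma geom (q : ℝ) (hq : q ∈ Ioo (0 : ℝ) 8) (a b : ℝ) (ha : 0 < a) (hb : b^2 < a^2) (ha2 : a ≤ 1/2)
    (h : a < 1/4 ∨ q * (a-1/2)^2 + (16-q)*b^2 < 1) :
    2 * a - 1/2 ≤ (1-(8-q)/48) * √(2*a^2-2*b^2) := by
  obtain ⟨hq0, hq8⟩ := hq
  have hR0 : 0 ≤ √(2*a^2-2*b^2) := Real.sqrt_nonneg _
  have hR2 : √(2*a^2-2*b^2)^2 = 2*a^2-2*b^2 := Real.sq_sqrt (by linarith)
  set R := √(2*a^2-2*b^2)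
  by_cases h4 : a < 1/4
  · have : 0 ≤ (1-(8-q)/48) * R := mul_nonneg (by linarith) hR0
    linarith
  · have h := h.resolve_left h4
    push Not at h4
    have hu : 0 ≤ a - 1/4 := by linarith
    have hfac : 0 ≤ (8-q)*(a-1/4)*(4*(3/4-a) - (12-q-16*(1/2-a))/12) :=
      mul_nonneg (mul_nonneg (by linarith) hu) (by linarith)
    have h1 : (1-(8-q)/24) * ((16-q)*b^2) ≤ (1-(8-q)/24) * (1 - q*(a-1/2)^2) :=
      mul_le_mul_of_nonneg_left (by linarith) (by linarith)
    have h2 : 0 ≤ (16-q) * ((1-(8-q)/24)*(2*a^2-2*b^2) - (2*a-1/2)^2) := by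
      nlinarith
    have h3 : 0 ≤ (1-(8-q)/24)*(2*a^2-2*b^2) - (2*a-1/2)^2 :=
      nonneg_of_mul_nonneg_right h2 (by linarith)
    refine (abs_le_of_sq_le_sq' ?_ (mul_nonneg (by linarith) hR0)).2
    rw [mul_pow, hR2]
    have h4 : 0 ≤ ((8-q)/48)^2 * (2*a^2-2*b^2) := mul_nonneg (sq_nonneg _) (by linarith)
    nlinarith

lemma fact_bound (n : ℕ) : ((2*n+1).factorial : ℝ) ≤ (2*n+1) * 4^n * (n.factorial:ℝ)^2 := by
  have h1 := Nat.centralBinom_le_four_pow n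
  have h2 : Nat.centralBinom n * n.factorial * n.factorial = (2*n).factorial := by
    have := Nat.choose_mul_factorial_mul_factorial (n := 2*n) (k := n) (by omega)
    rw [Nat.centralBinom]
    have h3 : 2*n-n = n := by omega
    rwa [h3] at this
  rw [Nat.factorial_succ, ← h2]
  push_cast
  have h1' : (Nat.centralBinom n : ℝ) ≤ 4^n := by exact_mod_cast h1
  calc (2*(n:ℝ)+1) * (Nat.centralBinom n * n.factorial * n.factorial) = (2*(n:ℝ)+1) * Nat.centralBinom n * (n.factorial:ℝ)^2 := by ring
    _ ≤ _ := by gcongr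

lemma goodSummable (x : ℝ) (hx : 0 < x) (d : ℕ → ℂ)
    (h : ∑' n : ℕ, ENNReal.ofReal ((2 : ℝ) ^ n / (Nat.factorial (2 * n + 1) : ℝ)) * (ENNReal.ofReal (x ^ (2 * n + 1)) * (‖d n‖₊ : ℝ≥0∞)^2) ≠ ⊤)
    (w : ℂ) (hw : ‖w‖ < x/√2) : Summable (fun n => ‖d n / (n.factorial:ℂ) * w^n‖) := by
  set M := (∑' n : ℕ, ENNReal.ofReal ((2 : ℝ) ^ n / (Nat.factorial (2 * n + 1) : ℝ)) * (ENNReal.ofReal (x ^ (2 * n + 1)) * (‖d n‖₊ : ℝ≥0∞)^2)).toReal with hM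
  have hM0 : 0 ≤ M := ENNReal.toReal_nonneg
  have hterm : ∀ n, (2 : ℝ) ^ n / (Nat.factorial (2 * n + 1) : ℝ) * (x^(2*n+1) * ‖d n‖^2) ≤ M := by
    intro n
    have h1 := ENNReal.toReal_mono h (ENNReal.le_tsum (f := fun n : ℕ => ENNReal.ofReal ((2 : ℝ) ^ n / (Nat.factorial (2 * n + 1) : ℝ)) * (ENNReal.ofReal (x ^ (2 * n + 1)) * (‖d n‖₊ : ℝ≥0∞)^2)) n)
    rw [ENNReal.toReal_mul, ENNReal.toReal_mul, ENNReal.toReal_ofReal (by positivity), ENNReal.toReal_ofReal (by positivity)] at h1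
    simpa using h1
  set t := ‖w‖ * √2 / x with ht
  have hsq : √2^2 = 2 := Real.sq_sqrt (by norm_num)
  have ht0 : 0 ≤ t := by positivity
  have ht1 : t < 1 := by
    rw [ht, div_lt_one hx]
    rwa [lt_div_iff₀ (by positivity)] at hw
  have hbound : ∀ n : ℕ, ‖d n / (n.factorial:ℂ) * w^n‖ ≤ √(M/x) * ((2*n+1) * t^n) := by
    intro n
    apply le_of_sq_le_sq _ (by positivity)
    rw [mul_pow √(M/x), Real.sq_sqrt (by positivity)]
    have hw' : ‖w‖ = t * x / √2 := by rw [ht]; field_simp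
    have e1 : ‖d n / (n.factorial:ℂ) * w^n‖^2 = ‖d n‖^2/(n.factorial:ℝ)^2 * (t^n)^2 * (x^(2*n) / 2^n) := by
      rw [norm_mul, norm_div, norm_pow, hw', Complex.norm_natCast]
      have : √2^(2*n) = 2^n := by rw [pow_mul, hsq]
      rw [← this, div_pow (t*x), mul_pow t]
      field_simp
      ring
    rw [e1]
    have h3 : ‖d n‖^2 * (x^(2*n)/2^n) / (n.factorial:ℝ)^2 ≤ M/x * (2*n+1) := by
      have h4 := hterm n
      have h5 := fact_bound n
      have hf : (0:ℝ) < (2*n+1).factorial := by exact_mod_cast Nat.factorial_pos _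
      have h6 : 2^n * x^(2*n+1) * ‖d n‖^2 ≤ M * ((2*n+1) * 4^n * (n.factorial:ℝ)^2) := by
        calc 2^n * x^(2*n+1) * ‖d n‖^2 = ((2 : ℝ) ^ n / (Nat.factorial (2 * n + 1) : ℝ) * (x^(2*n+1) * ‖d n‖^2)) * (2*n+1).factorial := by field_simp
          _ ≤ M * ((2*n+1) * 4^n * (n.factorial:ℝ)^2) := by gcongr
      have h44 : (4:ℝ)^n = 2^n*2^n := by rw [← mul_pow]; norm_num
      rw [h44] at h6
      have hf' : (0:ℝ) < n.factorial := by exact_mod_cast Nat.factorial_pos _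
      rw [div_le_iff₀ (by positivity)]
      have : ‖d n‖^2 * (x^(2*n)/2^n) = (2^n * x^(2*n+1) * ‖d n‖^2) / (2^n*2^n*x) := by
        field_simp; ring
      rw [this, div_le_iff₀ (by positivity)]
      refine h6.trans (le_of_eq ?_)
      field_simp
    calc ‖d n‖^2/(n.factorial:ℝ)^2 * (t^n)^2 * (x^(2*n) / 2^n) = (‖d n‖^2 * (x^(2*n)/2^n) / (n.factorial:ℝ)^2) * (t^n)^2 := by ring
      _ ≤ (M/x * (2*n+1)) * (t^n)^2 := by gcongr
      _ ≤ (M/x * ((2*n+1) * (2*n+1))) * (t^n)^2 := by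
        gcongr
        have : (0:ℝ) ≤ n := by positivity
        nlinarith
      _ = _ := by ring
  apply Summable.of_nonneg_of_le (fun _ => norm_nonneg _) hbound
  apply Summable.mul_left
  have h1 := summable_pow_mul_geometric_of_norm_lt_one 1 (r := t) (by rwa [Real.norm_of_nonneg ht0])
  have h0 := summable_geometric_of_lt_one ht0 ht1
  refine ((h1.mul_left 2).add h0).congr ?_
  intro n
  ring

lemma taylorInt (D : ℕ → ℝ → ℂ) (hD : ∀ n, ∀ x ∈ Ioo (0:ℝ) 1, HasDerivAt (D n) (D (n+1) x) x)
    (x₀ y : ℝ) (hx : x₀ ∈ Ioo (0:ℝ) 1) (hy : y ∈ Ioo (0:ℝ) 1) (n : ℕ) :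
    D 0 y - ∑ k ∈ Finset.range (n+1), D k x₀ / (k.factorial:ℂ) * ((y:ℂ)-x₀)^k
      = ∫ t in x₀..y, D (n+1) t * ((y:ℂ)-t)^n / (n.factorial:ℂ) := by
  have hsub : uIcc x₀ y ⊆ Ioo (0:ℝ) 1 := by
    intro t ht
    rcases le_total x₀ y with h | h
    · rw [uIcc_of_le h] at ht; exact ⟨hx.1.trans_le ht.1, ht.2.trans_lt hy.2⟩
    · rw [uIcc_of_ge h] at ht; exact ⟨hy.1.trans_le ht.1, ht.2.trans_lt hx.2⟩
  have hder : ∀ t ∈ Ioo (0:ℝ) 1, HasDerivAt (fun t : ℝ => ∑ k ∈ Finset.range (n+1), D k t / (k.factorial:ℂ) * ((y:ℂ)-t)^k) (D (n+1) t * ((y:ℂ)-t)^n / (n.factorial:ℂ)) t := by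
    intro t ht
    induction n with
    | zero => simpa using hD 0 t ht
    | succ m ih =>
      have hlin : HasDerivAt (fun t : ℝ => (y:ℂ) - t) (-1) t := by
        simpa using (Complex.ofRealCLM.hasDerivAt (x := t)).const_sub (y:ℂ)
      have h2 := ((hD (m+1) t ht).div_const ((m+1).factorial:ℂ)).mul (hlin.pow (m+1))
      have h3 := ih.add h2
      simp_rw [Finset.sum_range_succ _ (m+1)]
      refine h3.congr_deriv ?_
      rw [Nat.factorial_succ]
      have hf : (m.factorial:ℂ) ≠ 0 := by exact_mod_cast Nat.factorial_ne_zero m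
      have hm : ((m:ℂ)+1) ≠ 0 := by exact_mod_cast Nat.succ_ne_zero m
      push_cast
      simp only [Pi.pow_apply]
      field_simp
      ring
  rw [intervalIntegral.integral_eq_sub_of_hasDerivAt (fun t ht => hder t (hsub ht))]
  · congr 1
    rw [Finset.sum_range_succ']
    simp
  · apply ContinuousOn.intervalIntegrable
    have : ContinuousOn (D (n+1)) (uIcc x₀ y) := fun t ht => (hD (n+1) t (hsub ht)).continuousAt.continuousWithinAt
    fun_prop

lemma taylorConv (D : ℕ → ℝ → ℂ) (hD : ∀ n, ∀ x ∈ Ioo (0:ℝ) 1, HasDerivAt (D n) (D (n+1) x) x)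
    (ε : ℝ) (hε : 0 < ε) (A K : ℝ) (hK : 0 < K) (hA : 0 ≤ A)
    (hL : ∀ n, ∫ t in Ioo ε (1-ε), ‖D n t‖^2 ≤ A * ((n.factorial:ℝ) * K^n)^2)
    (x₀ y : ℝ) (hx : x₀ ∈ Ioo ε (1-ε)) (hy : y ∈ Ioo ε (1-ε)) (hxy : |y - x₀| < 1/K) :
    Filter.Tendsto (fun n => ∑ k ∈ Finset.range n, D k x₀ / (k.factorial:ℂ) * ((y:ℂ)-x₀)^k) Filter.atTop (nhds (D 0 y)) := by
  rw [← Filter.tendsto_add_atTop_iff_nat 1]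
  have hIcc : Icc ε (1-ε) ⊆ Ioo (0:ℝ) 1 := fun t ht => ⟨hε.trans_le ht.1, by linarith [ht.2]⟩
  have hcont : ∀ n, ContinuousOn (D n) (Icc ε (1-ε)) := fun n t ht => (hD n t (hIcc ht)).continuousAt.continuousWithinAt
  have hint1 : ∀ n, IntegrableOn (fun t => ‖D n t‖) (Ioo ε (1-ε)) := fun n =>
    ((hcont n).norm.integrableOn_Icc).mono_set Ioo_subset_Icc_self
  have hint2 : ∀ n, IntegrableOn (fun t => ‖D n t‖^2) (Ioo ε (1-ε)) := fun n =>
    (((hcont n).norm.pow 2).integrableOn_Icc).mono_set Ioo_subset_Icc_self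
  have hε2 : ε < 1 - ε := hx.1.trans hx.2
  have hL1 : ∀ n, ∫ t in Ioo ε (1-ε), ‖D n t‖ ≤ (n.factorial:ℝ) * K^n * (A + 1) := by
    intro n
    set L := (n.factorial:ℝ) * K^n with hLdef
    have hL0 : 0 < L := by
      have : (0:ℝ) < n.factorial := by exact_mod_cast Nat.factorial_pos _
      positivity
    have h1 : ∫ t in Ioo ε (1-ε), ‖D n t‖ ≤ ∫ t in Ioo ε (1-ε), (L⁻¹ * ‖D n t‖^2 + L) := by
      apply integral_mono (hint1 n) (((hint2 n).const_mul _).add (integrable_const L))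
      intro t
      change ‖D n t‖ ≤ L⁻¹ * ‖D n t‖^2 + L
      have : L * ‖D n t‖ ≤ ‖D n t‖^2 + L * L := by nlinarith [sq_nonneg (‖D n t‖ - L), norm_nonneg (D n t)]
      calc ‖D n t‖ = L⁻¹ * (L * ‖D n t‖) := by field_simp
        _ ≤ L⁻¹ * (‖D n t‖^2 + L * L) := by gcongr
        _ = _ := by field_simp
    refine h1.trans ?_
    rw [integral_add ((hint2 n).const_mul _) (integrable_const L), integral_const_mul, setIntegral_const]
    simp only [measureReal_def, Real.volume_Ioo, smul_eq_mul]
    rw [ENNReal.toReal_ofReal (by linarith)]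
    have h2 : L⁻¹ * ∫ t in Ioo ε (1-ε), ‖D n t‖^2 ≤ L⁻¹ * (A * L^2) := by gcongr; exact hL n
    have h3 : L⁻¹ * (A * L^2) = L * A := by field_simp
    nlinarith
  have hbd : ∀ n : ℕ, ‖(∑ k ∈ Finset.range (n+1), D k x₀ / (k.factorial:ℂ) * ((y:ℂ)-x₀)^k) - D 0 y‖ ≤ (A+1)*K * (((n:ℝ)+1) * (K*|y-x₀|)^n) := by
    intro n
    rw [norm_sub_rev, taylorInt D hD x₀ y (hIcc (Ioo_subset_Icc_self hx)) (hIcc (Ioo_subset_Icc_self hy))]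
    have hsub : uIoc x₀ y ⊆ Ioo ε (1-ε) := by
      intro t ht
      rcases le_total x₀ y with h | h
      · rw [uIoc_of_le h] at ht; exact ⟨hx.1.trans ht.1, ht.2.trans_lt hy.2⟩
      · rw [uIoc_of_ge h] at ht; exact ⟨hy.1.trans ht.1, ht.2.trans_lt hx.2⟩
    refine intervalIntegral.norm_integral_le_integral_norm_uIoc.trans ?_
    have hf : (0:ℝ) < n.factorial := by exact_mod_cast Nat.factorial_pos _
    have h1 : ∫ t in uIoc x₀ y, ‖D (n+1) t * ((y:ℂ)-t)^n / (n.factorial:ℂ)‖ ≤ ∫ t in uIoc x₀ y, ‖D (n+1) t‖ * (|y-x₀|^n / n.factorial) := by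
      apply integral_mono_of_nonneg
      · filter_upwards with t; exact norm_nonneg _
      · exact ((hint1 (n+1)).mono_set hsub).mul_const _
      · filter_upwards [ae_restrict_mem measurableSet_uIoc] with t ht
        rw [norm_div, norm_mul, norm_pow, Complex.norm_natCast, mul_div_assoc]
        have : ‖(y:ℂ) - t‖ ≤ |y-x₀| := by
          rw [← Complex.ofReal_sub, Complex.norm_real, Real.norm_eq_abs]
          rcases le_total x₀ y with h | h
          · rw [uIoc_of_le h] at ht
            rw [abs_of_nonneg (by linarith [ht.2]), abs_of_nonneg (by linarith)]; linarith [ht.1]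
          · rw [uIoc_of_ge h] at ht
            rw [abs_of_nonpos (by linarith [ht.1]), abs_of_nonpos (by linarith)]; linarith [ht.2]
        gcongr
    refine h1.trans ?_
    rw [integral_mul_const]
    have h2 : ∫ t in uIoc x₀ y, ‖D (n+1) t‖ ≤ ((n+1).factorial:ℝ) * K^(n+1) * (A + 1) := by
      refine le_trans ?_ (hL1 (n+1))
      exact setIntegral_mono_set (hint1 (n+1)) (by filter_upwards with t; exact norm_nonneg _) hsub.eventuallyLE
    calc _ ≤ (((n+1).factorial:ℝ) * K^(n+1) * (A + 1)) * (|y-x₀|^n / n.factorial) := by gcongr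
      _ = _ := by
        rw [Nat.factorial_succ, mul_pow]; push_cast; field_simp; ring
  rw [tendsto_iff_norm_sub_tendsto_zero]
  apply squeeze_zero (fun _ => norm_nonneg _) hbd
  rw [← mul_zero ((A+1)*K)]
  apply Filter.Tendsto.const_mul
  have ht0 : 0 ≤ K*|y-x₀| := by positivity
  have ht1 : K*|y-x₀| < 1 := by
    rw [lt_div_iff₀ hK] at hxy; linarith
  have h1 := tendsto_self_mul_const_pow_of_lt_one ht0 ht1
  have h2 := tendsto_pow_atTop_nhds_zero_of_lt_one ht0 ht1
  have := h1.add h2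
  simp only [add_zero] at this
  refine this.congr (fun n => by ring)

/-- Taylor series at `c`. -/
noncomputable def tay (D : ℕ → ℝ → ℂ) (c : ℝ) (z : ℂ) : ℂ := ∑' n : ℕ, D n c / (n.factorial:ℂ) * (z-c)^n

lemma tay_diff (D : ℕ → ℝ → ℂ) (c r : ℝ)
    (hs : ∀ w : ℂ, ‖w‖ < r → Summable (fun n => ‖D n c / (n.factorial:ℂ) * w^n‖)) :
    DifferentiableOn ℂ (tay D c) (ball (c:ℂ) r) := by
  intro z hz
  rw [mem_ball, dist_eq_norm] at hz
  obtain ⟨ρ, h1, h2⟩ := exists_between hz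
  have hρ : 0 ≤ ρ := (norm_nonneg _).trans h1.le
  have hsum := hs (ρ:ℂ) (by rwa [Complex.norm_real, Real.norm_of_nonneg hρ])
  have : DifferentiableOn ℂ (tay D c) (ball (c:ℂ) ρ) := by
    apply Complex.differentiableOn_tsum_of_summable_norm hsum _ isOpen_ball
    · intro n w hw
      rw [mem_ball, dist_eq_norm] at hw
      rw [norm_mul, norm_mul, norm_pow, norm_pow, Complex.norm_real, Real.norm_of_nonneg hρ]
      gcongr
    · intro n
      fun_prop
  exact (this.differentiableAt (isOpen_ball.mem_nhds (by rwa [mem_ball, dist_eq_norm]))).differentiableWithinAt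

lemma real_analytic (G : ℂ → ℂ) (y : ℝ) (h : AnalyticAt ℂ G y) : AnalyticAt ℝ (fun t : ℝ => G t) y := by
  have h1 : AnalyticAt ℝ G (Complex.ofRealCLM y) := h.restrictScalars
  exact h1.comp (Complex.ofRealCLM.analyticAt y)

theorem ext_exists (D : ℕ → ℝ → ℂ) (hD : ∀ n, ∀ x ∈ Ioo (0:ℝ) 1, HasDerivAt (D n) (D (n+1) x) x)
    (hL : ∀ ε : ℝ, 0 < ε → ∃ A K : ℝ, 0 ≤ A ∧ 0 < K ∧ ∀ n, ∫ t in Ioo ε (1-ε), ‖D n t‖^2 ≤ A * ((n.factorial:ℝ) * K^n)^2)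
    (Gd : Set ℝ) (hGd : Gd ⊆ Ioo 0 1)
    (hdense : ∀ x ∈ Ioo (0:ℝ) 1, ∀ U : Set ℝ, IsOpen U → x ∈ U → ∃ c ∈ Gd, c ∈ U)
    (hs : ∀ c ∈ Gd, ∀ w : ℂ, ‖w‖ < min c (1-c) / √2 → Summable (fun n => ‖D n c / (n.factorial:ℂ) * w^n‖)) :
    ∃ F : ℂ → ℂ, (∀ c ∈ Gd, ∀ z ∈ ball (c:ℂ) (min c (1-c) / √2), HasSum (fun n => D n c / (n.factorial:ℂ) * (z-c)^n) (F z)) ∧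
      DifferentiableOn ℂ F Omega ∧ ∀ x ∈ Ioo (0:ℝ) 1, F x = D 0 x := by
  set r : ℝ → ℝ := fun c => min c (1-c) / √2 with hr
  have hrc : Continuous r := by simp only [hr]; fun_prop
  have hrpos : ∀ c ∈ Ioo (0:ℝ) 1, 0 < r c := by
    intro c hc
    have : 0 < min c (1-c) := lt_min hc.1 (by linarith [hc.2])
    simp only [hr]; positivity
  have hHS : ∀ c ∈ Gd, ∀ z ∈ ball (c:ℂ) (r c), HasSum (fun n => D n c / (n.factorial:ℂ) * (z-c)^n) (tay D c z) := by
    intro c hc z hz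
    rw [mem_ball, dist_eq_norm] at hz
    exact (hs c hc _ hz).of_norm.hasSum
  have hdiff : ∀ c ∈ Gd, DifferentiableOn ℂ (tay D c) (ball (c:ℂ) (r c)) := fun c hc => tay_diff D c _ (hs c hc)
  have hcover : ∀ z : ℂ, ∀ x ∈ Ioo (0:ℝ) 1, z ∈ ball (x:ℂ) (r x) → ∀ U : Set ℝ, IsOpen U → x ∈ U → ∃ c ∈ Gd, z ∈ ball (c:ℂ) (r c) ∧ c ∈ U := by
    intro z x hx hz U hU hxU
    have ho : IsOpen {c : ℝ | dist z (c:ℂ) < r c} := isOpen_lt (by fun_prop) hrc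
    obtain ⟨c, hc, hc1, hc2⟩ := hdense x hx ({c : ℝ | dist z (c:ℂ) < r c} ∩ U) (ho.inter hU) ⟨hz, hxU⟩
    exact ⟨c, hc, hc1, hc2⟩
  have hloc : ∀ y₀ ∈ Ioo (0:ℝ) 1, ∃ δ > 0, ∀ c ∈ Gd, |c - y₀| < δ → ∀ y : ℝ, |y - y₀| < δ → (y:ℂ) ∈ ball (c:ℂ) (r c) → tay D c y = D 0 y := by
    intro y₀ hy₀
    set ε := min y₀ (1-y₀) / 2 with hε
    have hm : 0 < min y₀ (1-y₀) := lt_min hy₀.1 (by linarith [hy₀.2])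
    have hε0 : 0 < ε := by positivity
    have hl := min_le_left y₀ (1-y₀)
    have hr' := min_le_right y₀ (1-y₀)
    obtain ⟨A, K, hA, hK, hAK⟩ := hL ε hε0
    refine ⟨min ε (1/(2*K)), by positivity, ?_⟩
    intro c hc hcy y hyy hyb
    have a1 := abs_lt.1 (hcy.trans_le (min_le_left _ _))
    have a2 := abs_lt.1 (hyy.trans_le (min_le_left _ _))
    have b1 := hcy.trans_le (min_le_right _ _)
    have b2 := hyy.trans_le (min_le_right _ _)
    have hKK : 1/(2*K) + 1/(2*K) = 1/K := by field_simp; norm_num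
    have h3 : |y - c| < 1/K := by
      calc |y - c| = |(y - y₀) - (c - y₀)| := by congr 1; ring
        _ ≤ |y-y₀| + |c-y₀| := abs_sub _ _
        _ < 1/K := by linarith
    have := taylorConv D hD ε hε0 A K hK hA hAK c y ⟨by linarith, by linarith⟩ ⟨by linarith, by linarith⟩ h3
    exact tendsto_nhds_unique (hHS c hc _ hyb).tendsto_sum_nat this
  have hnear : ∀ y : ℝ, ∀ c : ℝ, (y:ℂ) ∈ ball (c:ℂ) (r c) → ∀ᶠ t : ℝ in nhds y, (t:ℂ) ∈ ball (c:ℂ) (r c) := by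
    intro y c hy
    exact Complex.continuous_ofReal.continuousAt.eventually (isOpen_ball.mem_nhds hy)
  have hself : ∀ y ∈ Ioo (0:ℝ) 1, (y:ℂ) ∈ ball (y:ℂ) (r y) := fun y hy => mem_ball_self (hrpos y hy)
  -- D 0 is real analytic
  have hDan : ∀ y ∈ Ioo (0:ℝ) 1, AnalyticAt ℝ (D 0) y := by
    intro y hy
    obtain ⟨δ, hδ, hδ'⟩ := hloc y hy
    obtain ⟨c, hc, hyc, hcU⟩ := hcover y y hy (hself y hy) (ball y δ) isOpen_ball (mem_ball_self hδ)
    have h1 : AnalyticAt ℂ (tay D c) y := (hdiff c hc).analyticAt (isOpen_ball.mem_nhds hyc)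
    refine (real_analytic _ _ h1).congr ?_
    filter_upwards [hnear y c hyc, ball_mem_nhds y hδ] with t ht1 ht2
    exact hδ' c hc hcU t ht2 ht1
  have hballIoo : ∀ c ∈ Gd, ∀ y : ℝ, (y:ℂ) ∈ ball (c:ℂ) (r c) → y ∈ Ioo (0:ℝ) 1 := by
    intro c hc y hy
    rw [mem_ball, dist_eq_norm, ← Complex.ofReal_sub, Complex.norm_real, Real.norm_eq_abs] at hy
    have hm : 0 < min c (1-c) := lt_min (hGd hc).1 (by linarith [(hGd hc).2])
    have : r c ≤ min c (1-c) := by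
      apply div_le_self hm.le
      rw [Real.one_le_sqrt]; norm_num
    have := abs_lt.1 hy
    have hl := min_le_left c (1-c)
    have hr' := min_le_right c (1-c)
    constructor <;> linarith
  have hreal : ∀ c ∈ Gd, ∀ y : ℝ, (y:ℂ) ∈ ball (c:ℂ) (r c) → tay D c y = D 0 y := by
    intro c hc
    have hset : ∀ y : ℝ, (y:ℂ) ∈ ball (c:ℂ) (r c) ↔ y ∈ ball c (r c) := by
      intro y
      rw [mem_ball, mem_ball, dist_eq_norm, dist_eq_norm, ← Complex.ofReal_sub, Complex.norm_real]
    have hA1 : AnalyticOnNhd ℝ (fun t : ℝ => tay D c t) (ball c (r c)) := by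
      intro y hy
      exact real_analytic _ _ ((hdiff c hc).analyticAt (isOpen_ball.mem_nhds ((hset y).2 hy)))
    have hA2 : AnalyticOnNhd ℝ (D 0) (ball c (r c)) := by
      intro y hy
      exact hDan y (hballIoo c hc y ((hset y).2 hy))
    have hcI := hGd hc
    have := hA1.eqOn_of_preconnected_of_eventuallyEq hA2 (convex_ball c (r c)).isPreconnected (mem_ball_self (hrpos c hcI)) (by
      obtain ⟨δ, hδ, hδ'⟩ := hloc c hcI
      filter_upwards [hnear c c (hself c hcI), ball_mem_nhds c hδ] with t ht1 ht2
      exact hδ' c hc (by simpa using hδ) t ht2 ht1)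
    intro y hy
    exact this ((hset y).1 hy)
  have hagree : ∀ c ∈ Gd, ∀ cc ∈ Gd, ∀ z : ℂ, z ∈ ball (c:ℂ) (r c) → z ∈ ball (cc:ℂ) (r cc) → tay D c z = tay D cc z := by
    intro c hc cc hc' z hz hz'
    have hre : ∀ c : ℝ, z ∈ ball (c:ℂ) (r c) → ((z.re:ℝ):ℂ) ∈ ball (c:ℂ) (r c) := by
      intro c hz
      rw [mem_ball, dist_eq_norm] at hz ⊢
      refine lt_of_le_of_lt ?_ hz
      rw [← Complex.ofReal_sub, Complex.norm_real, Real.norm_eq_abs]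
      simpa using Complex.abs_re_le_norm (z - c)
    have hA1 : AnalyticOnNhd ℂ (tay D c) (ball (c:ℂ) (r c) ∩ ball (cc:ℂ) (r cc)) := fun w hw =>
      (hdiff c hc).analyticAt (isOpen_ball.mem_nhds hw.1)
    have hA2 : AnalyticOnNhd ℂ (tay D cc) (ball (c:ℂ) (r c) ∩ ball (cc:ℂ) (r cc)) := fun w hw =>
      (hdiff cc hc').analyticAt (isOpen_ball.mem_nhds hw.2)
    refine hA1.eqOn_of_preconnected_of_frequently_eq hA2 ((convex_ball _ _).inter (convex_ball _ _)).isPreconnected ⟨hre c hz, hre cc hz'⟩ ?_ ⟨hz, hz'⟩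
    have hev : ∀ᶠ t : ℝ in nhdsWithin z.re {z.re}ᶜ, tay D c t = tay D cc t := by
      filter_upwards [nhdsWithin_le_nhds (hnear z.re c (hre c hz)), nhdsWithin_le_nhds (hnear z.re cc (hre cc hz'))] with t h1 h2
      rw [hreal c hc t h1, hreal cc hc' t h2]
    have htend : Filter.Tendsto (fun t : ℝ => (t:ℂ)) (nhdsWithin z.re {z.re}ᶜ) (nhdsWithin (z.re:ℂ) {(z.re:ℂ)}ᶜ) := by
      apply tendsto_nhdsWithin_of_tendsto_nhds_of_eventually_within
      · exact (Complex.continuous_ofReal.tendsto _).mono_left nhdsWithin_le_nhds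
      · filter_upwards [self_mem_nhdsWithin] with t ht
        simpa using ht
    exact htend.frequently hev.frequently
  classical
  let F : ℂ → ℂ := fun z => if h : ∃ c ∈ Gd, z ∈ ball (c:ℂ) (r c) then tay D h.choose z else 0
  have hF : ∀ c ∈ Gd, ∀ z ∈ ball (c:ℂ) (r c), F z = tay D c z := by
    intro c hc z hz
    have h : ∃ c ∈ Gd, z ∈ ball (c:ℂ) (r c) := ⟨c, hc, hz⟩
    simp only [F, dif_pos h]
    exact hagree _ h.choose_spec.1 c hc z h.choose_spec.2 hz
  refine ⟨F, ?_, ?_, ?_⟩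
  · intro c hc z hz
    rw [hF c hc z hz]
    exact hHS c hc z hz
  · intro z hz
    have : ∃ x ∈ Ioo (0:ℝ) 1, z ∈ ball (x:ℂ) (r x) := by
      rcases hz with hz | hz
      · simp only [mem_iUnion] at hz
        obtain ⟨x, hx, hz⟩ := hz
        refine ⟨x, ⟨hx.1, by linarith [hx.2]⟩, ?_⟩
        simp only [hr]
        rwa [min_eq_left (by linarith [hx.2])]
      · simp only [mem_iUnion] at hz
        obtain ⟨x, hx, hz⟩ := hz
        refine ⟨x, ⟨by linarith [hx.1], hx.2⟩, ?_⟩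
        simp only [hr]
        rwa [min_eq_right (by linarith [hx.1])]
    obtain ⟨x, hx, hzx⟩ := this
    obtain ⟨c, hc, hzc, -⟩ := hcover z x hx hzx univ isOpen_univ trivial
    have h1 : DifferentiableAt ℂ (tay D c) z := (hdiff c hc).differentiableAt (isOpen_ball.mem_nhds hzc)
    have h2 : F =ᶠ[nhds z] tay D c := by
      filter_upwards [isOpen_ball.mem_nhds hzc] with w hw
      exact hF c hc w hw
    exact (h2.symm.differentiableAt_iff.1 h1).differentiableWithinAt
  · intro x hx
    obtain ⟨c, hc, hxc, -⟩ := hcover x x hx (hself x hx) univ isOpen_univ trivial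
    rw [hF c hc _ hxc, hreal c hc x hxc]

lemma isOpen_Omega : IsOpen Omega := by
  unfold Omega
  apply IsOpen.union <;> exact isOpen_biUnion (fun _ _ => isOpen_ball)

lemma isOpen_OmegaQ (q : ℝ) : IsOpen (OmegaQ q) := by
  unfold OmegaQ EllQ
  have ha : IsOpen {z : ℂ | z.re < 1 / 4} := isOpen_lt (by fun_prop) (by fun_prop)
  have hb : IsOpen {z : ℂ | 3 / 4 < z.re} := isOpen_lt (by fun_prop) (by fun_prop)
  have h1 : IsOpen {z : ℂ | z.re < 1 / 4 ∨ 3 / 4 < z.re} := ha.union hb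
  have h2 : IsOpen {z : ℂ | q * (z.re - 1 / 2) ^ 2 + (16 - q) * z.im ^ 2 < 1} :=
    isOpen_lt (by fun_prop) (by fun_prop)
  exact (isOpen_Omega.inter h1).union (isOpen_Omega.inter h2)

lemma OmegaQ_subset (q : ℝ) : OmegaQ q ⊆ Omega := by
  rintro z (h | h) <;> exact h.1

lemma fact_bound2 (n : ℕ) (ε : ℝ) (hε : 0 < ε) (S : ℝ) (hS : 0 ≤ S) :
    S / (2 ^ n / ((2*n+1).factorial : ℝ) * ε^(2*n+1)) ≤ S/ε * ((n.factorial:ℝ) * (3/ε)^n)^2 := by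
  have h1 := fact_bound n
  have hf : (0:ℝ) < (2*n+1).factorial := by exact_mod_cast Nat.factorial_pos _
  have h2 : (2*(n:ℝ)+1) ≤ 3^n := by
    have := one_add_mul_le_pow (a := (2:ℝ)) (by norm_num) n
    norm_num at this
    linarith
  have h3 : (2:ℝ)^n ≤ 3^n := by gcongr; norm_num
  have h44 : (4:ℝ)^n = 2^n*2^n := by rw [← mul_pow]; norm_num
  have h5 : ((2*n+1).factorial : ℝ) ≤ 3^n * (2^n*3^n) * (n.factorial:ℝ)^2 := by
    refine h1.trans ?_
    rw [h44]
    gcongr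
  calc S / (2 ^ n / ((2*n+1).factorial : ℝ) * ε^(2*n+1)) = S / (2^n * ε^(2*n+1)) * ((2*n+1).factorial : ℝ) := by
        field_simp
    _ ≤ S / (2^n * ε^(2*n+1)) * (3^n * (2^n*3^n) * (n.factorial:ℝ)^2) := by gcongr
    _ = _ := by
      rw [div_pow]; field_simp; ring

lemma l2bound (D : ℕ → ℝ → ℂ) (hD : ∀ n, ContinuousOn (D n) (Ioo 0 1)) (S : ℝ≥0∞) (hS : S ≠ ⊤)
    (h : ∀ n : ℕ, ENNReal.ofReal ((2 : ℝ) ^ n / (Nat.factorial (2 * n + 1) : ℝ)) *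
            ∫⁻ x in Ioo (0 : ℝ) (1 / 2),
              ENNReal.ofReal (x ^ (2 * n + 1)) *
                ((‖D n x‖₊ : ℝ≥0∞) ^ 2 + (‖D n (1 - x)‖₊ : ℝ≥0∞) ^ 2) ≤ S) (ε : ℝ) (hε : 0 < ε) :
    ∃ A K : ℝ, 0 ≤ A ∧ 0 < K ∧ ∀ n, ∫ t in Ioo ε (1-ε), ‖D n t‖^2 ≤ A * ((n.factorial:ℝ) * K^n)^2 := by
  refine ⟨S.toReal/ε, 3/ε, by positivity, by positivity, ?_⟩
  intro n
  refine le_trans ?_ (fact_bound2 n ε hε S.toReal ENNReal.toReal_nonneg)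
  have hf : (0:ℝ) < (2*n+1).factorial := by exact_mod_cast Nat.factorial_pos _
  have hsub : Ioo ε (1-ε) ⊆ Ioo (0:ℝ) 1 := fun t ht => ⟨hε.trans ht.1, by linarith [ht.2]⟩
  have hmeas : AEStronglyMeasurable (fun t => ‖D n t‖^2) (volume.restrict (Ioo ε (1-ε))) :=
    (((hD n).mono hsub).norm.pow 2).aestronglyMeasurable measurableSet_Ioo
  rw [integral_eq_lintegral_of_nonneg_ae (by filter_upwards with t; positivity) hmeas]
  apply ENNReal.toReal_le_of_le_ofReal (by positivity)
  rw [ENNReal.ofReal_div_of_pos (by positivity), ENNReal.ofReal_toReal hS]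
  rw [ENNReal.le_div_iff_mul_le (Or.inl (by simp; positivity)) (Or.inl ENNReal.ofReal_ne_top)]
  set g : ℝ → ℝ≥0∞ := fun x => (‖D n x‖₊ : ℝ≥0∞) ^ 2 with hg
  have hgeq : ∀ t, ENNReal.ofReal (‖D n t‖^2) = g t := by
    intro t
    rw [ENNReal.ofReal_pow (norm_nonneg _), ofReal_norm]; rfl
  simp_rw [hgeq]
  have h1 : ∫⁻ t in Ioo ε (1-ε), g t ≤ ∫⁻ t in Ioo ε (1/2), (g t + g (1-t)) := by
    have hcov : Ioo ε (1-ε) ⊆ Ioc ε (1/2) ∪ Ico (1/2) (1-ε) := by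
      intro t ht
      rcases le_total t (1/2) with h | h
      · exact Or.inl ⟨ht.1, h⟩
      · exact Or.inr ⟨h, ht.2⟩
    have hmp : ∫⁻ t in Ico (1/2) (1-ε), g t = ∫⁻ t in Ioc ε (1/2), g (1-t) := by
      have := (Measure.measurePreserving_sub_left volume (1:ℝ)).setLIntegral_comp_preimage_emb
        (measurableEmbedding_subLeft 1) g (Ico (1/2) (1-ε))
      rw [← this]
      congr 2
      ext t
      simp only [mem_preimage, mem_Ico, mem_Ioc]
      constructor <;> rintro ⟨h1, h2⟩ <;> constructor <;> linarith
    calc _ ≤ ∫⁻ t in Ioc ε (1/2) ∪ Ico (1/2) (1-ε), g t := lintegral_mono_set hcov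
      _ ≤ _ := lintegral_union_le _ _ _
      _ = (∫⁻ t in Ioo ε (1/2), g t) + ∫⁻ t in Ioo ε (1/2), g (1-t) := by
        rw [hmp, setLIntegral_congr Ioo_ae_eq_Ioc.symm, setLIntegral_congr Ioo_ae_eq_Ioc.symm]
      _ ≤ _ := le_lintegral_add _ _
  refine le_trans ?_ (h n)
  rw [ENNReal.ofReal_mul (by positivity), mul_comm, mul_assoc]
  gcongr
  calc ENNReal.ofReal (ε^(2*n+1)) * ∫⁻ t in Ioo ε (1-ε), g t ≤ ENNReal.ofReal (ε^(2*n+1)) * ∫⁻ t in Ioo ε (1/2), (g t + g (1-t)) := by gcongr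
    _ = ∫⁻ t in Ioo ε (1/2), ENNReal.ofReal (ε^(2*n+1)) * (g t + g (1-t)) := (lintegral_const_mul' _ _ ENNReal.ofReal_ne_top).symm
    _ ≤ ∫⁻ t in Ioo ε (1/2), ENNReal.ofReal (t^(2*n+1)) * (g t + g (1-t)) := by
      apply setLIntegral_mono' measurableSet_Ioo
      intro t ht
      have := ht.1.le
      gcongr
    _ ≤ _ := lintegral_mono_set (Ioo_subset_Ioo_left hε.le)

lemma geomE (q : ℝ) (hq : q ∈ Ioo (0 : ℝ) 8) (z : ℂ) (ha : 0 < z.re) (hb : z.im^2 < z.re^2) (ha2 : z.re ≤ 1/2)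
    (h : z.re < 1/4 ∨ q * (z.re-1/2)^2 + (16-q)*z.im^2 < 1) :
    ENNReal.ofReal ((8-q)/48/Real.pi) ≤ ∫⁻ x in Ioo (0:ℝ) (1/2), kerH x z :=
  kernelLower _ (by linarith [hq.1]) z ha hb (geom q hq _ _ ha hb ha2 h)

lemma coefEq (x : ℝ) (hx : 0 < x) (n : ℕ) (d a : ℂ) (h : ‖a‖ = ‖d‖ / n.factorial) :
    ENNReal.ofReal (2^n * x^(2*n+1) * (n.factorial:ℝ)^2 / ((2*n+1).factorial : ℝ)) * (‖a‖₊ : ℝ≥0∞)^2 =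
    ENNReal.ofReal ((2 : ℝ) ^ n / (Nat.factorial (2 * n + 1) : ℝ)) * (ENNReal.ofReal (x ^ (2 * n + 1)) * (‖d‖₊ : ℝ≥0∞)^2) := by
  have h1 : ∀ w : ℂ, (‖w‖₊ : ℝ≥0∞)^2 = ENNReal.ofReal (‖w‖^2) := by
    intro w
    rw [ENNReal.ofReal_pow (norm_nonneg _), ofReal_norm]; rfl
  have hf : (0:ℝ) < n.factorial := by exact_mod_cast Nat.factorial_pos _
  rw [h1, h1, h, ← ENNReal.ofReal_mul (by positivity), ← ENNReal.ofReal_mul (by positivity), ← ENNReal.ofReal_mul (by positivity)]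
  congr 1
  field_simp

lemma dense_aux (P : ℝ → Prop) (h : ∀ᵐ x ∂(volume.restrict (Ioo (0:ℝ) (1/2))), P x) (x₀ : ℝ) (h0 : 0 < x₀) (h1 : x₀ ≤ 1/2)
    (U : Set ℝ) (hU : IsOpen U) (hx : x₀ ∈ U) : ∃ x ∈ Ioo (0:ℝ) (1/2), P x ∧ x ∈ U := by
  have hcl : x₀ ∈ closure (Ioo (0:ℝ) (1/2)) := by
    rw [closure_Ioo (by norm_num)]; exact ⟨h0.le, h1⟩
  have hne := mem_closure_iff.1 hcl U hU hx
  have hpos : 0 < volume (U ∩ Ioo (0:ℝ) (1/2)) := (hU.inter isOpen_Ioo).measure_pos _ hne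
  rw [ae_restrict_iff' measurableSet_Ioo] at h
  by_contra hcon
  push Not at hcon
  have : volume (U ∩ Ioo (0:ℝ) (1/2)) = 0 := by
    refine measure_mono_null ?_ h
    rintro x ⟨hxU, hxI⟩ hP
    exact hcon x hxI (hP hxI) hxU
  exact hpos.ne' this

set_option maxHeartbeats 1000000 in
theorem main_aux (q : ℝ) (hq : q ∈ Ioo (0 : ℝ) 8) (f : ℝ → ℂ) (D : ℕ → ℝ → ℂ) (hD0 : D 0 = f)
    (hD : ∀ n, ∀ x ∈ Ioo (0:ℝ) 1, HasDerivAt (D n) (D (n+1) x) x) (S : ℝ≥0∞) (hS : S < ⊤)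
    (hSdef : S = ∑' n : ℕ, ENNReal.ofReal ((2 : ℝ) ^ n / (Nat.factorial (2 * n + 1) : ℝ)) *
            ∫⁻ x in Ioo (0 : ℝ) (1 / 2),
              ENNReal.ofReal (x ^ (2 * n + 1)) *
                ((‖D n x‖₊ : ℝ≥0∞) ^ 2 + (‖D n (1 - x)‖₊ : ℝ≥0∞) ^ 2)) :
    ∃ F : ℂ → ℂ, DifferentiableOn ℂ F Omega ∧
          (∀ x ∈ Ioo (0 : ℝ) 1, F (x : ℂ) = f x) ∧
          ENNReal.ofReal ((8-q)/48/Real.pi) * ∫⁻ z in OmegaQ q, (‖F z‖₊ : ℝ≥0∞) ^ 2 ∂volume ≤ S := by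
  set I := Ioo (0:ℝ) (1/2) with hI
  have hIm : MeasurableSet I := measurableSet_Ioo
  have hcont : ∀ n, ContinuousOn (D n) (Ioo 0 1) := fun n x hx => (hD n x hx).continuousAt.continuousWithinAt
  let tL : ℕ → ℝ → ℝ≥0∞ := fun n x => ENNReal.ofReal ((2 : ℝ) ^ n / (Nat.factorial (2 * n + 1) : ℝ)) * (ENNReal.ofReal (x ^ (2 * n + 1)) * (‖D n x‖₊ : ℝ≥0∞)^2)
  let tR : ℕ → ℝ → ℝ≥0∞ := fun n x => ENNReal.ofReal ((2 : ℝ) ^ n / (Nat.factorial (2 * n + 1) : ℝ)) * (ENNReal.ofReal (x ^ (2 * n + 1)) * (‖D n (1-x)‖₊ : ℝ≥0∞)^2)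
  have hmL : ∀ n, AEMeasurable (tL n) (volume.restrict I) := by
    intro n
    have h1 : AEMeasurable (fun x => D n x) (volume.restrict I) :=
      ((hcont n).mono (fun x hx => ⟨hx.1, by linarith [hx.2]⟩)).aemeasurable hIm
    have h2 : Measurable (fun x : ℝ => ENNReal.ofReal (x ^ (2 * n + 1))) :=
      (measurable_id.pow_const _).ennreal_ofReal
    exact (h2.aemeasurable.mul (h1.nnnorm.coe_nnreal_ennreal.pow_const 2)).const_mul _
  have hmR : ∀ n, AEMeasurable (tR n) (volume.restrict I) := by
    intro n
    have h1 : AEMeasurable (fun x => D n (1-x)) (volume.restrict I) := by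
      apply ContinuousOn.aemeasurable _ hIm
      exact (hcont n).comp (by fun_prop) (fun x hx => ⟨by linarith [hx.2], by linarith [hx.1]⟩)
    have h2 : Measurable (fun x : ℝ => ENNReal.ofReal (x ^ (2 * n + 1))) :=
      (measurable_id.pow_const _).ennreal_ofReal
    exact (h2.aemeasurable.mul (h1.nnnorm.coe_nnreal_ennreal.pow_const 2)).const_mul _
  let AL : ℝ → ℝ≥0∞ := fun x => ∑' n, tL n x
  let AR : ℝ → ℝ≥0∞ := fun x => ∑' n, tR n x
  have hmAL : AEMeasurable AL (volume.restrict I) := AEMeasurable.ennreal_tsum hmL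
  have hmAR : AEMeasurable AR (volume.restrict I) := AEMeasurable.ennreal_tsum hmR
  have hSsum : S = (∫⁻ x in I, AL x) + ∫⁻ x in I, AR x := by
    simp only [AL, AR]
    rw [lintegral_tsum hmL, lintegral_tsum hmR, ← ENNReal.tsum_add, hSdef]
    congr 1
    ext n
    rw [← lintegral_add_left' (hmL n), ← lintegral_const_mul' _ _ ENNReal.ofReal_ne_top]
    apply lintegral_congr
    intro x
    simp only [tL, tR]
    ring
  have hALfin : ∀ᵐ x ∂(volume.restrict I), AL x < ⊤ := by
    apply ae_lt_top' hmAL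
    intro h; rw [hSsum, h] at hS; simp at hS
  have hARfin : ∀ᵐ x ∂(volume.restrict I), AR x < ⊤ := by
    apply ae_lt_top' hmAR
    intro h; rw [hSsum, h] at hS; simp at hS
  let P : ℝ → Prop := fun x => AL x < ⊤ ∧ AR x < ⊤
  have hP : ∀ᵐ x ∂(volume.restrict I), P x := hALfin.and hARfin
  let Gd : Set ℝ := {c | ∃ x ∈ I, P x ∧ (c = x ∨ c = 1 - x)}
  obtain ⟨F, hF1, hF2, hF3⟩ := ext_exists D hD
    (fun ε hε => l2bound D hcont S hS.ne (fun n => by rw [hSdef]; exact ENNReal.le_tsum n) ε hε) Gd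
    (by
      rintro c ⟨x, hx, -, rfl | rfl⟩
      · exact ⟨hx.1, by linarith [hx.2]⟩
      · exact ⟨by linarith [hx.2], by linarith [hx.1]⟩)
    (by
      intro x₀ hx₀ U hU hxU
      rcases le_total x₀ (1/2) with h | h
      · obtain ⟨x, hx, hPx, hxU⟩ := dense_aux P hP x₀ hx₀.1 h U hU hxU
        exact ⟨x, ⟨x, hx, hPx, Or.inl rfl⟩, hxU⟩
      · obtain ⟨x, hx, hPx, hxU⟩ := dense_aux P hP (1-x₀) (by linarith [hx₀.2]) (by linarith) ((fun t => 1 - t) ⁻¹' U)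
          (hU.preimage (by fun_prop)) (by simpa using hxU)
        exact ⟨1-x, ⟨x, hx, hPx, Or.inr rfl⟩, hxU⟩)
    (by
      rintro c ⟨x, hx, hPx, rfl | rfl⟩ w hw
      · rw [min_eq_left (by linarith [hx.2])] at hw
        exact goodSummable _ hx.1 (fun n => D n c) hPx.1.ne w hw
      · rw [min_eq_right (by linarith [hx.2])] at hw
        exact goodSummable x hx.1 (fun n => D n (1-x)) hPx.2.ne w (by simpa using hw))
  refine ⟨F, hF2, fun x hx => by rw [hF3 x hx, hD0], ?_⟩
  let φ : ℂ → ℝ≥0∞ := Omega.indicator (fun z => (‖F z‖₊ : ℝ≥0∞)^2)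
  have hφ : Measurable φ := by
    have : Measurable (Omega.indicator F) := by
      classical
      rw [← Set.piecewise_eq_indicator]
      exact hF2.continuousOn.measurable_piecewise continuousOn_const isOpen_Omega.measurableSet
    have h2 : φ = fun z => (‖Omega.indicator F z‖₊ : ℝ≥0∞)^2 := by
      ext z
      simp only [φ, indicator]
      split_ifs <;> simp
    rw [h2]
    fun_prop
  have hφle : ∀ z, φ z ≤ (‖F z‖₊ : ℝ≥0∞)^2 := fun z => indicator_le_self' (fun _ _ => zero_le) z
  have hLeft : ∀ᵐ x : ℝ ∂(volume.restrict I), ∫⁻ z in ball (x:ℂ) (x/√2), ENNReal.ofReal (1/(Real.pi * √(x^2-2*‖z-x‖^2))) * φ z ≤ AL x := by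
    filter_upwards [hP, ae_restrict_mem hIm] with x hPx hx
    have h1 := polarIneq x hx.1 (fun n => D n x / (n.factorial:ℂ)) F (by
      intro z hz
      have := hF1 x ⟨x, hx, hPx, Or.inl rfl⟩ z
      rw [min_eq_left (by linarith [hx.2])] at this
      exact this hz)
    refine (lintegral_mono (fun z => by gcongr; exact hφle z)).trans (h1.trans (le_of_eq ?_))
    simp only [AL, tL]
    congr 1
    ext n
    apply coefEq x hx.1 n
    rw [norm_div, Complex.norm_natCast]
  have hRight : ∀ᵐ x : ℝ ∂(volume.restrict I), ∫⁻ z in ball (x:ℂ) (x/√2), ENNReal.ofReal (1/(Real.pi * √(x^2-2*‖z-x‖^2))) * φ (1-z) ≤ AR x := by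
    filter_upwards [hP, ae_restrict_mem hIm] with x hPx hx
    have h1 := polarIneq x hx.1 (fun n => (-1)^n * (D n (1-x) / (n.factorial:ℂ))) (fun z => F (1-z)) (by
      intro z hz
      have := hF1 (1-x) ⟨x, hx, hPx, Or.inr rfl⟩ (1-z)
      rw [min_eq_right (by linarith [hx.2])] at this
      have h2 := this (by
        rw [mem_ball, dist_eq_norm] at hz ⊢
        have e : (1 - z - ((1-x:ℝ):ℂ)) = -(z - x) := by push_cast; ring
        rw [e, norm_neg]
        simpa using hz)
      refine h2.congr_fun ?_
      intro n
      have e : (1 - z - ((1-x:ℝ):ℂ)) = (-1) * (z - x) := by push_cast; ring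
      rw [e, mul_pow]
      ring)
    refine (lintegral_mono (fun z => by gcongr; exact hφle (1-z))).trans (h1.trans (le_of_eq ?_))
    simp only [AR, tR]
    congr 1
    ext n
    apply coefEq x hx.1 n
    rw [norm_mul, norm_pow, norm_neg, norm_one, one_pow, one_mul, norm_div, Complex.norm_natCast]
  have hφ' : Measurable (fun z => φ (1-z)) := hφ.comp (by fun_prop)
  have hE1 := leftLemma (ENNReal.ofReal ((8-q)/48/Real.pi)) φ hφ AL hLeft (OmegaQ q ∩ {z | z.re ≤ 1/2}) (by
    rintro z ⟨hz, hre⟩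
    have hsec := (mem_Omega_sector z (OmegaQ_subset q hz)).1
    apply geomE q hq z hsec.1 hsec.2 hre
    rcases hz with hz | hz
    · rcases hz.2 with h | h
      · exact Or.inl h
      · simp only [mem_setOf_eq] at hre; linarith
    · exact Or.inr hz.2)
  have hE2 := leftLemma (ENNReal.ofReal ((8-q)/48/Real.pi)) (fun z => φ (1-z)) hφ' AR hRight ((fun z => 1 - z) ⁻¹' (OmegaQ q ∩ {z | 1/2 < z.re})) (by
    rintro w ⟨hz, hre⟩
    have hsec := (mem_Omega_sector _ (OmegaQ_subset q hz)).2
    simp only [mem_setOf_eq, Complex.sub_re, Complex.one_re, Complex.sub_im, Complex.one_im, sub_sub_cancel, zero_sub, neg_sq] at hsec hre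
    apply geomE q hq w hsec.1 hsec.2 (by linarith)
    rcases hz with hz | hz
    · rcases hz.2 with h | h
      · simp only [Complex.sub_re, Complex.one_re] at h; linarith
      · simp only [Complex.sub_re, Complex.one_re] at h; left; linarith
    · right
      have := hz.2
      simp only [EllQ, mem_setOf_eq, Complex.sub_re, Complex.one_re, Complex.sub_im, Complex.one_im, zero_sub, neg_sq] at this
      refine lt_of_eq_of_lt ?_ this
      ring)
  have hmp := (Measure.measurePreserving_sub_left volume (1:ℂ)).setLIntegral_comp_preimage_emb
        (measurableEmbedding_subLeft 1) φ (OmegaQ q ∩ {z | 1/2 < z.re})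
  rw [hmp] at hE2
  have e0 : ∫⁻ z in OmegaQ q, (‖F z‖₊ : ℝ≥0∞) ^ 2 = ∫⁻ z in OmegaQ q, φ z := by
    apply setLIntegral_congr_fun (isOpen_OmegaQ q).measurableSet
    intro z hz
    simp only [φ]
    rw [indicator_of_mem (OmegaQ_subset q hz)]
  have e1 : ∫⁻ z in OmegaQ q, φ z ≤ (∫⁻ z in OmegaQ q ∩ {z | z.re ≤ 1/2}, φ z) + ∫⁻ z in OmegaQ q ∩ {z | 1/2 < z.re}, φ z := by
    refine le_trans (lintegral_mono_set ?_) (lintegral_union_le _ _ _)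
    intro z hz
    rcases le_or_gt z.re (1/2) with h | h
    · exact Or.inl ⟨hz, h⟩
    · exact Or.inr ⟨hz, h⟩
  rw [e0, hSsum]
  calc _ ≤ ENNReal.ofReal ((8-q)/48/Real.pi) * ((∫⁻ z in OmegaQ q ∩ {z | z.re ≤ 1/2}, φ z) + ∫⁻ z in OmegaQ q ∩ {z | 1/2 < z.re}, φ z) := by gcongr
    _ ≤ _ := by rw [mul_add]; exact add_le_add hE1 hE2

/-- For each `q ∈ (0,8)` there is `C_q > 0` such that any smooth `f` on `(0,1)` with finite
(AHS)-type sum `S` extends holomorphically to `Ω`, with `C_q ∫_{Ω_q} |F|² ≤ S`. -/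
theorem ahs_lower_bound_OmegaQ (q : ℝ) (hq : q ∈ Ioo (0 : ℝ) 8) :
    ∃ C : ℝ, 0 < C ∧
      ∀ f : ℝ → ℂ, ContDiffOn ℝ (⊤ : ℕ∞) f (Ioo 0 1) →
        (∑' n : ℕ, ENNReal.ofReal ((2 : ℝ) ^ n / (Nat.factorial (2 * n + 1) : ℝ)) *
            ∫⁻ x in Ioo (0 : ℝ) (1 / 2),
              ENNReal.ofReal (x ^ (2 * n + 1)) *
                ((‖iteratedDerivWithin n f (Ioo 0 1) x‖₊ : ℝ≥0∞) ^ 2 +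
                  (‖iteratedDerivWithin n f (Ioo 0 1) (1 - x)‖₊ : ℝ≥0∞) ^ 2) ∂volume) < ⊤ →
        ∃ F : ℂ → ℂ, DifferentiableOn ℂ F Omega ∧
          (∀ x ∈ Ioo (0 : ℝ) 1, F (x : ℂ) = f x) ∧
          ENNReal.ofReal C * ∫⁻ z in OmegaQ q, (‖F z‖₊ : ℝ≥0∞) ^ 2 ∂volume ≤
            ∑' n : ℕ, ENNReal.ofReal ((2 : ℝ) ^ n / (Nat.factorial (2 * n + 1) : ℝ)) *
              ∫⁻ x in Ioo (0 : ℝ) (1 / 2),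
                ENNReal.ofReal (x ^ (2 * n + 1)) *
                  ((‖iteratedDerivWithin n f (Ioo 0 1) x‖₊ : ℝ≥0∞) ^ 2 +
                    (‖iteratedDerivWithin n f (Ioo 0 1) (1 - x)‖₊ : ℝ≥0∞) ^ 2) ∂volume := by
  have hq8 := hq.2
  refine ⟨(8-q)/48/Real.pi, div_pos (by linarith) Real.pi_pos, ?_⟩
  intro f hf hS
  refine main_aux q hq f (fun n => iteratedDerivWithin n f (Ioo 0 1)) iteratedDerivWithin_zero ?_ _ hS rfl
  intro n x hx
  have h1 : DifferentiableOn ℝ (iteratedDerivWithin n f (Ioo 0 1)) (Ioo 0 1) :=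
    hf.differentiableOn_iteratedDerivWithin (by exact_mod_cast ENat.natCast_lt_top n) (uniqueDiffOn_Ioo 0 1)
  have h2 := (h1 x hx).hasDerivWithinAt.hasDerivAt (isOpen_Ioo.mem_nhds hx)
  simp only [iteratedDerivWithin_succ]
  exact h2
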